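/- Let d ≥ 2 be an even integer. Then there exists a positive integer 𝐧 = 𝐧(d), depending only on d, with the following property: for every field K of characteristic zero containing all roots of unity, every d-dimensional K-vector space V, and every nondegenerate symmetric anisotropic K-bilinear form φ : V × V → K, every finite subgroup of PO(V,φ) = GO(V,φ)/(K*·1_V) has order dividing 2^{𝐧(d)}. In particular, PO(V,φ) is bounded. -/

import Mathlib

variable {K V : Type*} [Field K] [AddCommGroup V] [Module K V]

/-- The group of similitudes `GO(V,φ)`: the subgroup of the group of `K`-linear
automorphisms of `V` consisting of those `u` for which there is `μ ∈ K*` with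
`φ(ux,uy) = μ·φ(x,y)` for all `x,y ∈ V`. -/
def similitudeSubgroup (φ : LinearMap.BilinForm K V) : Subgroup (V ≃ₗ[K] V) where
  carrier := {u | ∃ μ : K, μ ≠ 0 ∧ ∀ x y : V, φ (u x) (u y) = μ * φ x y}
  one_mem' := ⟨1, one_ne_zero, fun x y => by rw [one_mul]; rfl⟩
  mul_mem' := by
    rintro u v ⟨μ, hμ, hu⟩ ⟨ν, hν, hv⟩
    refine ⟨μ * ν, mul_ne_zero hμ hν, fun x y => ?_⟩
    have h : φ ((u * v) x) ((u * v) y) = φ (u (v x)) (u (v y)) := rfl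
    rw [h, hu, hv]; ring
  inv_mem' := by
    rintro u ⟨μ, hμ, hu⟩
    refine ⟨μ⁻¹, inv_ne_zero hμ, fun x y => ?_⟩
    have h := hu ((u⁻¹ : V ≃ₗ[K] V) x) ((u⁻¹ : V ≃ₗ[K] V) y)
    rw [show u ((u⁻¹ : V ≃ₗ[K] V) x) = x from u.apply_symm_apply x,
      show u ((u⁻¹ : V ≃ₗ[K] V) y) = y from u.apply_symm_apply y] at h
    rw [h, inv_mul_cancel_left₀ hμ]

/-- The central subgroup `K*·1_V` of `GO(V,φ)` consisting of the nonzero scalar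
automorphisms. -/
def scalarSubgroup (φ : LinearMap.BilinForm K V) : Subgroup (similitudeSubgroup φ) where
  carrier := {u | ∃ c : K, c ≠ 0 ∧ ∀ x : V, (u : V ≃ₗ[K] V) x = c • x}
  one_mem' := ⟨1, one_ne_zero, fun x => by simp⟩
  mul_mem' := by
    rintro u v ⟨c, hc, hcu⟩ ⟨d, hd, hdv⟩
    refine ⟨c * d, mul_ne_zero hc hd, fun x => ?_⟩
    have h : ((u * v : similitudeSubgroup φ) : V ≃ₗ[K] V) x
        = (u : V ≃ₗ[K] V) ((v : V ≃ₗ[K] V) x) := rfl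
    rw [h, hdv, map_smul, hcu, smul_smul, mul_comm]
  inv_mem' := by
    rintro u ⟨c, hc, hcu⟩
    refine ⟨c⁻¹, inv_ne_zero hc, fun x => ?_⟩
    apply (u : V ≃ₗ[K] V).injective
    rw [show ((u⁻¹ : similitudeSubgroup φ) : V ≃ₗ[K] V) x = (u : V ≃ₗ[K] V).symm x from rfl,
      (u : V ≃ₗ[K] V).apply_symm_apply, map_smul, hcu, smul_smul, inv_mul_cancel₀ hc, one_smul]

instance scalarSubgroup_normal (φ : LinearMap.BilinForm K V) : (scalarSubgroup φ).Normal := by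
  constructor
  rintro n ⟨c, hc, hn⟩ g
  refine ⟨c, hc, fun x => ?_⟩
  have h1 : ((g * n * g⁻¹ : similitudeSubgroup φ) : V ≃ₗ[K] V) x
      = (g : V ≃ₗ[K] V) ((n : V ≃ₗ[K] V) ((g : V ≃ₗ[K] V).symm x)) := rfl
  rw [h1, hn, map_smul, (g : V ≃ₗ[K] V).apply_symm_apply]

/-- The projective orthogonal group `PO(V,φ) = GO(V,φ)/(K*·1_V)`. -/
abbrev projOrthogonalGroup (φ : LinearMap.BilinForm K V) :=
  similitudeSubgroup φ ⧸ scalarSubgroup φ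

open Polynomial in
/-- A finite-order isometry of an anisotropic form is an involution. -/
lemma aux_isometry_sq [FiniteDimensional K V]
    (hK : ∀ m : ℕ, 0 < m → ∃ ζ : K, IsPrimitiveRoot ζ m)
    (φ : LinearMap.BilinForm K V) (haniso : ∀ v : V, v ≠ 0 → φ v v ≠ 0)
    (f : Module.End K V) (hf : ∀ x y, φ (f x) (f y) = φ x y) (m : ℕ) (hm : 0 < m)
    (hfm : f ^ m = 1) : f ^ 2 = 1 := by
  classical
  obtain ⟨ζ, hζ⟩ := hK m hm
  have h0 : (X ^ m - C 1 : K[X]) ≠ 0 := X_pow_sub_C_ne_zero hm 1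
  have hIntg : IsIntegral K f := Algebra.IsIntegral.isIntegral f
  have hdvd : minpoly K f ∣ X ^ m - C 1 := minpoly.dvd _ _ (by simp [hfm])
  have hspl : (minpoly K f).Splits := (X_pow_sub_one_splits hζ).of_dvd h0 hdvd
  have hnd : (minpoly K f).roots.Nodup :=
    Multiset.nodup_of_le (roots.le_of_dvd h0 hdvd) hζ.nthRoots_one_nodup
  have h2 : (X ^ 2 - C 1 : K[X]) ≠ 0 := X_pow_sub_C_ne_zero (by norm_num) 1
  have hle : (minpoly K f).roots ≤ (X ^ 2 - C 1 : K[X]).roots := by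
    rw [Multiset.le_iff_subset hnd]
    intro r hr
    have hr' := isRoot_of_mem_roots hr
    obtain ⟨v, hv⟩ := (Module.End.hasEigenvalue_of_isRoot hr').exists_hasEigenvector
    have hv1 : f v = r • v := hv.apply_eq_smul
    have h := hf v v
    rw [hv1] at h
    simp only [map_smul, LinearMap.smul_apply, smul_eq_mul] at h
    have hvv := haniso v hv.2
    have hrr : r * r = 1 := by
      apply mul_right_cancel₀ hvv
      rw [one_mul, mul_assoc, h]
    rw [mem_roots h2]
    simp [IsRoot.def, pow_two, hrr]
  have hd := hspl.dvd_of_roots_le_roots (minpoly.ne_zero hIntg) hle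
  have := (minpoly.dvd_iff).1 hd
  simpa [sub_eq_zero] using this

/-- If `f ^ 4 = μ ^ 2` and `μ` is not a square then `f` has trace zero. -/
lemma aux_trace_zero [FiniteDimensional K V] (L : Type*) [Field L] [Algebra K L] [IsAlgClosed L]
    (hK : ∀ m : ℕ, 0 < m → ∃ ζ : K, IsPrimitiveRoot ζ m)
    (f : Module.End K V) (μ : K) (hμ : μ ≠ 0) (hf : f ^ 4 = algebraMap K _ (μ ^ 2))
    (ht : LinearMap.trace K V f ≠ 0) : ∃ c : K, c * c = μ := by
  classical
  by_cases hV : Subsingleton V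
  · exact absurd (by rw [Subsingleton.elim f 0, map_zero]) ht
  rw [not_subsingleton_iff_nontrivial] at hV
  obtain ⟨i, hi⟩ := hK 4 (by norm_num)
  obtain ⟨s, hs⟩ := IsAlgClosed.exists_pow_nat_eq (algebraMap K L μ) (n := 2) (by norm_num)
  have hs0 : s ≠ 0 := by
    rintro rfl
    rw [zero_pow two_ne_zero] at hs
    exact hμ ((map_eq_zero _).1 hs.symm)
  let b := Module.finBasis K V
  let M := LinearMap.toMatrix b b f
  let N : Matrix _ _ L := (algebraMap K L).mapMatrix M
  have hM4 : M ^ 4 = algebraMap K _ (μ ^ 2) := by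
    have := congrArg (LinearMap.toMatrixAlgEquiv b) hf
    rw [map_pow, AlgEquiv.commutes] at this
    exact this
  have hN4 : N ^ 4 = algebraMap L _ ((algebraMap K L μ) ^ 2) := by
    change ((algebraMap K L).mapMatrix M) ^ 4 = _
    rw [← map_pow, hM4, Algebra.algebraMap_eq_smul_one, Algebra.algebraMap_eq_smul_one]
    ext a c
    by_cases h : a = c <;> simp [h]
  have htr : algebraMap K L (LinearMap.trace K V f) = N.charpoly.roots.sum := by
    rw [← Matrix.trace_eq_sum_roots_charpoly, LinearMap.trace_eq_matrix_trace K b f]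
    simp [N, M, Matrix.trace]
  have hne : Nonempty (Fin (Module.finrank K V)) := ⟨⟨0, Module.finrank_pos⟩⟩
  have hmem : N.charpoly.roots.sum ∈ Submodule.span K {s} := by
    apply multiset_sum_mem
    intro r hr
    have h1 := Matrix.mem_spectrum_iff_isRoot_charpoly.2 (Polynomial.isRoot_of_mem_roots hr)
    have h2 := spectrum.pow_mem_pow N 4 h1
    rw [hN4, spectrum.scalar_eq, Set.mem_singleton_iff, ← hs] at h2
    have hiL : IsPrimitiveRoot (algebraMap K L i) 4 := hi.map_of_injective (algebraMap K L).injective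
    have h3 : (r / s) ^ 4 = 1 := by
      rw [div_pow, h2]; field_simp
    obtain ⟨k, -, hk⟩ := hiL.eq_pow_of_pow_eq_one h3
    rw [Submodule.mem_span_singleton]
    refine ⟨i ^ k, ?_⟩
    rw [Algebra.smul_def, map_pow, hk]
    field_simp
  rw [← htr, Submodule.mem_span_singleton] at hmem
  obtain ⟨x, hx⟩ := hmem
  rw [Algebra.smul_def] at hx
  have hx0 : x ≠ 0 := by
    rintro rfl
    rw [map_zero, zero_mul] at hx
    exact ht ((map_eq_zero _).1 hx.symm)
  refine ⟨LinearMap.trace K V f / x, ?_⟩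
  apply (algebraMap K L).injective
  have hx0' : algebraMap K L x ≠ 0 := by simpa using hx0
  rw [map_mul, map_div₀, ← hx, ← hs]
  field_simp

/-- A family of distinct commuting involutions has at most `2 ^ dim` members. -/
lemma aux_invol [FiniteDimensional K V] [CharZero K] {ι : Type*} (f : ι → Module.End K V)
    (hinj : Function.Injective f)
    (hsq : ∀ i, f i ^ 2 = 1) (hcomm : ∀ i j, Commute (f i) (f j)) :
    Finite ι ∧ Nat.card ι ≤ 2 ^ Module.finrank K V := by
  classical
  have h2 : (2 : K) ≠ 0 := two_ne_zero
  have hss : ∀ i, (f i).IsSemisimple := fun i =>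
    Module.End.isSemisimple_of_squarefree_aeval_eq_zero (p := Polynomial.X ^ 2 - Polynomial.C 1)
      ((Polynomial.separable_X_pow_sub_C (n := 2) (1 : K) (by simp) one_ne_zero).squarefree)
      (by simp [hsq])
  have heq : ∀ i μ, (f i).maxGenEigenspace μ = (f i).eigenspace μ := fun i μ =>
    (Module.End.isFinitelySemisimple_iff_isSemisimple.2 (hss i)).maxGenEigenspace_eq_eigenspace μ
  have hmt : ∀ i j μ, Set.MapsTo (f i) ((f j).maxGenEigenspace μ) ((f j).maxGenEigenspace μ) :=
    fun i j μ => Module.End.mapsTo_maxGenEigenspace_of_comm (hcomm j i) μ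
  have happ : ∀ i x, f i (f i x) = x := fun i x => by
    have := LinearMap.congr_fun (hsq i) x
    simpa [pow_two] using this
  have htop1 : ∀ i, ⨆ μ, (f i).maxGenEigenspace μ = ⊤ := by
    intro i
    rw [eq_top_iff]
    intro x _
    have hx : x = (2 : K)⁻¹ • (x + f i x) + (2 : K)⁻¹ • (x - f i x) := by
      rw [← smul_add]
      simp [← two_smul K x, smul_smul, h2]
    rw [hx]
    refine Submodule.add_mem _ (Submodule.smul_mem _ _ ?_) (Submodule.smul_mem _ _ ?_)
    · refine Submodule.mem_iSup_of_mem (1 : K) ?_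
      rw [heq, Module.End.mem_eigenspace_iff]
      simp [happ, add_comm]
    · refine Submodule.mem_iSup_of_mem (-1 : K) ?_
      rw [heq, Module.End.mem_eigenspace_iff]
      simp [happ]
  have htop := Module.End.iSup_iInf_maxGenEigenspace_eq_top_of_forall_mapsTo f hmt htop1
  have hind := Module.End.independent_iInf_maxGenEigenspace_of_forall_mapsTo f hmt
  let W : (ι → K) → Submodule K V := fun χ => ⨅ i, (f i).maxGenEigenspace (χ i)
  have : Fintype {χ // W χ ≠ ⊥} := hind.fintypeNeBotOfFiniteDimensional
  have hcard : Fintype.card {χ // W χ ≠ ⊥} ≤ Module.finrank K V := hind.subtype_ne_bot_le_finrank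
  have hW : ∀ χ i x, x ∈ W χ → f i x = χ i • x := by
    intro χ i x hx
    have := (Submodule.mem_iInf _).1 hx i
    rwa [heq, Module.End.mem_eigenspace_iff] at this
  let g : ι → ({χ // W χ ≠ ⊥} → Bool) := fun i χ => decide (χ.1 i = 1)
  have hg : Function.Injective g := by
    intro i j hij
    apply hinj
    have hle : (⊤ : Submodule K V) ≤ LinearMap.eqLocus (f i) (f j) := by
      rw [← htop]
      refine iSup_le fun χ x hx => ?_
      by_cases hχ : W χ = ⊥
      · have : x ∈ W χ := hx
        rw [hχ, Submodule.mem_bot] at this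
        simp [this]
      · have h1 := congrFun hij ⟨χ, hχ⟩
        have hpm : ∀ k, χ k = 1 ∨ χ k = -1 := by
          intro k
          obtain ⟨y, hy, hy0⟩ := (Submodule.ne_bot_iff _).1 hχ
          have h3 := happ k y
          rw [hW χ k y hy, map_smul, hW χ k y hy, smul_smul] at h3
          have h4 : (χ k * χ k - 1) • y = 0 := by rw [sub_smul, h3, one_smul, sub_self]
          have h5 := (smul_eq_zero.1 h4).resolve_right hy0
          exact mul_self_eq_one_iff.1 (sub_eq_zero.1 h5)
        have h6 : χ i = 1 ↔ χ j = 1 := by simpa [g] using h1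
        have h7 : χ i = χ j := by
          rcases hpm i with h | h <;> rcases hpm j with h' | h'
          · rw [h, h']
          · rw [h, h6.1 h]
          · rw [h', h6.2 h']
          · rw [h, h']
        rw [LinearMap.mem_eqLocus, hW χ i x hx, hW χ j x hx, h7]
    ext x
    exact hle (Submodule.mem_top (x := x))
  refine ⟨Finite.of_injective g hg, (Nat.card_le_card_of_injective g hg).trans ?_⟩
  rw [Nat.card_eq_fintype_card, Fintype.card_fun, Fintype.card_bool]
  exact Nat.pow_le_pow_right (by norm_num) hcard

/-- The underlying endomorphism of a similitude. -/
def simEnd (φ : LinearMap.BilinForm K V) : similitudeSubgroup φ →* Module.End K V where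
  toFun u := ((u : V ≃ₗ[K] V) : V →ₗ[K] V)
  map_one' := rfl
  map_mul' _ _ := rfl

lemma simEnd_inj (φ : LinearMap.BilinForm K V) : Function.Injective (simEnd φ) := by
  intro u v h
  apply Subtype.ext
  apply LinearEquiv.toLinearMap_injective
  exact h

lemma mem_scalar_iff (φ : LinearMap.BilinForm K V) [Nontrivial V] (u : similitudeSubgroup φ) :
    u ∈ scalarSubgroup φ ↔ ∃ c : K, simEnd φ u = algebraMap K _ c := by
  constructor
  · rintro ⟨c, -, h⟩
    exact ⟨c, LinearMap.ext h⟩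
  · rintro ⟨c, h⟩
    have h' : ∀ x, (u : V ≃ₗ[K] V) x = c • x := fun x => LinearMap.congr_fun h x
    refine ⟨c, ?_, h'⟩
    rintro rfl
    obtain ⟨x, hx⟩ := exists_ne (0 : V)
    have := h' x
    rw [zero_smul] at this
    exact hx ((u : V ≃ₗ[K] V).map_eq_zero_iff.1 this)

/-- The isometries inside the similitudes. -/
def isoSub (φ : LinearMap.BilinForm K V) : Subgroup (similitudeSubgroup φ) where
  carrier := {u | ∀ x y : V, φ (simEnd φ u x) (simEnd φ u y) = φ x y}
  one_mem' := fun x y => rfl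
  mul_mem' := by
    intro u v hu hv x y
    rw [map_mul]
    exact (hu _ _).trans (hv _ _)
  inv_mem' := by
    intro u hu x y
    rw [← hu]
    have h : ∀ x, simEnd φ u (simEnd φ u⁻¹ x) = x := fun x => by
      rw [← Module.End.mul_apply, ← map_mul, mul_inv_cancel, map_one]; rfl
    rw [h, h]

lemma isoSub_of_smul (φ : LinearMap.BilinForm K V) (u : similitudeSubgroup φ) (c : K)
    (hc : c ≠ 0) (hu : ∀ x y, φ (simEnd φ u x) (simEnd φ u y) = (c * c) * φ x y) :
    (QuotientGroup.mk u : projOrthogonalGroup φ) ∈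
      (isoSub φ).map (QuotientGroup.mk' (scalarSubgroup φ)) := by
  let s : similitudeSubgroup φ := ⟨LinearEquiv.smulOfNeZero K V c hc, c * c, mul_ne_zero hc hc,
    fun x y => by simp [mul_assoc]⟩
  have hs : s ∈ scalarSubgroup φ := ⟨c, hc, fun x => rfl⟩
  refine ⟨u * s⁻¹, ?_, ?_⟩
  · intro x y
    have h : ∀ x, x = c • simEnd φ s⁻¹ x := fun x => by
      change x = simEnd φ s (simEnd φ s⁻¹ x)
      rw [← Module.End.mul_apply, ← map_mul, mul_inv_cancel, map_one]; rfl
    rw [map_mul, Module.End.mul_apply, Module.End.mul_apply, hu]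
    conv_rhs => rw [h x, h y]
    simp [mul_assoc]
  · rw [map_mul, map_inv]
    have : QuotientGroup.mk' (scalarSubgroup φ) s = 1 := (QuotientGroup.eq_one_iff s).2 hs
    rw [this, inv_one, mul_one]; rfl

lemma sim_pow (φ : LinearMap.BilinForm K V) (f : Module.End K V) (μ : K)
    (hf : ∀ x y, φ (f x) (f y) = μ * φ x y) (m : ℕ) (x y : V) :
    φ ((f ^ m) x) ((f ^ m) y) = μ ^ m * φ x y := by
  induction m with
  | zero => simp
  | succ k ih =>
    rw [pow_succ', Module.End.mul_apply, Module.End.mul_apply, hf, ih]; ring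

lemma sim_pow_four [FiniteDimensional K V] [Nontrivial V]
    (hK : ∀ m : ℕ, 0 < m → ∃ ζ : K, IsPrimitiveRoot ζ m)
    (φ : LinearMap.BilinForm K V) (haniso : ∀ v : V, v ≠ 0 → φ v v ≠ 0)
    (u : similitudeSubgroup φ) (μ : K) (hμ : μ ≠ 0)
    (hu : ∀ x y, φ (simEnd φ u x) (simEnd φ u y) = μ * φ x y)
    (hfin : IsOfFinOrder (QuotientGroup.mk u : projOrthogonalGroup φ)) :
    simEnd φ u ^ 4 = algebraMap K _ (μ ^ 2) := by
  obtain ⟨m, hm, hum⟩ := isOfFinOrder_iff_pow_eq_one.1 hfin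
  rw [← QuotientGroup.mk_pow, QuotientGroup.eq_one_iff, mem_scalar_iff] at hum
  obtain ⟨c, hc⟩ := hum
  rw [map_pow] at hc
  obtain ⟨v, hv⟩ := exists_ne (0 : V)
  have h1 := sim_pow φ _ μ hu m v v
  rw [hc] at h1
  simp only [Module.algebraMap_end_apply, map_smul, LinearMap.smul_apply, smul_eq_mul] at h1
  have h2 : c * c = μ ^ m := mul_right_cancel₀ (haniso v hv) (by rw [← h1]; ring)
  set f := simEnd φ u with hf
  have hw := aux_isometry_sq hK φ haniso (μ⁻¹ • f ^ 2) (fun x y => by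
    have := sim_pow φ f μ hu 2 x y
    simp only [LinearMap.smul_apply, map_smul, this, smul_eq_mul]
    field_simp) m hm (by
    rw [smul_pow, ← pow_mul, mul_comm, pow_mul, hc, ← map_pow, Algebra.algebraMap_eq_smul_one,
      smul_smul, pow_two, h2, ← mul_pow, inv_mul_cancel₀ hμ, one_pow, one_smul])
  rw [smul_pow, ← pow_mul] at hw
  rw [Algebra.algebraMap_eq_smul_one, ← hw, smul_smul, ← mul_pow, mul_inv_cancel₀ hμ, one_pow,
    one_smul]

lemma iso_sq [FiniteDimensional K V] [Nontrivial V]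
    (hK : ∀ m : ℕ, 0 < m → ∃ ζ : K, IsPrimitiveRoot ζ m)
    (φ : LinearMap.BilinForm K V) (haniso : ∀ v : V, v ≠ 0 → φ v v ≠ 0)
    (u : similitudeSubgroup φ) (hu : u ∈ isoSub φ)
    (hfin : IsOfFinOrder (QuotientGroup.mk u : projOrthogonalGroup φ)) :
    simEnd φ u ^ 2 = 1 := by
  have h := sim_pow_four hK φ haniso u 1 one_ne_zero (fun x y => by rw [one_mul]; exact hu x y) hfin
  rw [one_pow, map_one] at h
  exact aux_isometry_sq hK φ haniso _ hu 4 (by norm_num) h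

lemma card_iso [CharZero K] [FiniteDimensional K V] [Nontrivial V]
    (hK : ∀ m : ℕ, 0 < m → ∃ ζ : K, IsPrimitiveRoot ζ m)
    (φ : LinearMap.BilinForm K V) (haniso : ∀ v : V, v ≠ 0 → φ v v ≠ 0)
    (G : Subgroup (projOrthogonalGroup φ)) [Finite G] :
    Nat.card (((isoSub φ).map (QuotientGroup.mk' (scalarSubgroup φ))).subgroupOf G)
      ≤ 2 ^ Module.finrank K V := by
  let A : Subgroup (similitudeSubgroup φ) :=
    isoSub φ ⊓ G.comap (QuotientGroup.mk' (scalarSubgroup φ))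
  have hsq : ∀ a : A, a * a = 1 := by
    intro a
    have hfin : IsOfFinOrder (QuotientGroup.mk a.1 : projOrthogonalGroup φ) :=
      G.subtype.isOfFinOrder (isOfFinOrder_of_finite (⟨_, a.2.2⟩ : G))
    have := iso_sq hK φ haniso a.1 a.2.1 hfin
    apply Subtype.ext
    apply simEnd_inj φ
    rw [← map_pow, pow_two] at this
    exact this
  have hcomm : ∀ a b : A, a * b = b * a := by
    intro a b
    have hi : ∀ a : A, a⁻¹ = a := fun a => inv_eq_of_mul_eq_one_right (hsq a)
    rw [← hi (a * b), mul_inv_rev, hi, hi]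
  obtain ⟨hA, hAc⟩ := aux_invol (fun a : A => simEnd φ a.1)
    (fun a b h => Subtype.ext (simEnd_inj φ h))
    (fun a => by
      rw [← map_pow, pow_two, ← Subgroup.coe_mul, hsq]; rfl)
    (fun a b => by
      change _ * _ = _ * _
      rw [← map_mul, ← map_mul, ← Subgroup.coe_mul, hcomm]; rfl)
  refine le_trans ?_ hAc
  let F : A → (((isoSub φ).map (QuotientGroup.mk' (scalarSubgroup φ))).subgroupOf G) :=
    fun a => ⟨⟨QuotientGroup.mk a.1, a.2.2⟩, ⟨a.1, a.2.1, rfl⟩⟩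
  apply Nat.card_le_card_of_surjective F
  rintro ⟨⟨g, hg⟩, hgm⟩
  obtain ⟨u, hu, hug⟩ := id hgm
  have hug' : (QuotientGroup.mk u : projOrthogonalGroup φ) = g := hug
  subst hug'
  exact ⟨⟨u, hu, hg⟩, rfl⟩

lemma index_iso [CharZero K] [FiniteDimensional K V] [Nontrivial V]
    (hK : ∀ m : ℕ, 0 < m → ∃ ζ : K, IsPrimitiveRoot ζ m)
    (φ : LinearMap.BilinForm K V) (haniso : ∀ v : V, v ≠ 0 → φ v v ≠ 0)
    (G : Subgroup (projOrthogonalGroup φ)) [Finite G] :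
    (((isoSub φ).map (QuotientGroup.mk' (scalarSubgroup φ))).subgroupOf G).index
      ≤ Module.finrank K V ^ 2 := by
  set H := ((isoSub φ).map (QuotientGroup.mk' (scalarSubgroup φ))).subgroupOf G with hH
  let r : G ⧸ H → similitudeSubgroup φ := fun q => Quotient.out (Quotient.out q).1
  have hr : ∀ q, (QuotientGroup.mk (r q) : projOrthogonalGroup φ) = (Quotient.out q).1 :=
    fun q => Quotient.out_eq' _
  have htr : ∀ p q, p ≠ q → LinearMap.trace K V (simEnd φ ((r p)⁻¹ * r q)) = 0 := by
    intro p q hpq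
    by_contra hne
    set t := (r p)⁻¹ * r q with ht
    have htG : (QuotientGroup.mk t : projOrthogonalGroup φ)
        = ((Quotient.out p)⁻¹ * Quotient.out q : G) := by
      rw [ht, QuotientGroup.mk_mul, QuotientGroup.mk_inv, hr, hr]; rfl
    have hfin : IsOfFinOrder (QuotientGroup.mk t : projOrthogonalGroup φ) := by
      rw [htG]
      exact G.subtype.isOfFinOrder (isOfFinOrder_of_finite ((Quotient.out p)⁻¹ * Quotient.out q : G))
    obtain ⟨μ, hμ, hu⟩ := t.2
    have h4 := sim_pow_four hK φ haniso t μ hμ hu hfin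
    obtain ⟨c, hc⟩ := aux_trace_zero (AlgebraicClosure K) hK _ μ hμ h4 hne
    have hmem := isoSub_of_smul φ t c (by rintro rfl; simp at hc; exact hμ hc.symm)
      (by rw [hc]; exact hu)
    rw [htG] at hmem
    have hmem' : (Quotient.out p)⁻¹ * Quotient.out q ∈ H := hmem
    rw [← QuotientGroup.eq] at hmem'
    apply hpq
    rw [← Quotient.out_eq' p, ← Quotient.out_eq' q]
    exact hmem'
  have hli : LinearIndependent K (fun q => simEnd φ (r q)) := by
    classical
    have : Fintype (G ⧸ H) := Fintype.ofFinite _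
    rw [Fintype.linearIndependent_iff]
    intro a ha p
    have h1 := congrArg (fun f => LinearMap.trace K V (simEnd φ (r p)⁻¹ * f)) ha
    simp only [Finset.mul_sum, map_sum, mul_smul_comm, map_smul, mul_zero, map_zero,
      ← map_mul (simEnd φ)] at h1
    rw [Finset.sum_eq_single p (fun q _ hq => by rw [htr p q hq.symm, smul_zero])
      (fun h => absurd (Finset.mem_univ p) h), inv_mul_cancel, map_one, LinearMap.trace_one] at h1
    have hd : (Module.finrank K V : K) ≠ 0 := Nat.cast_ne_zero.2 Module.finrank_pos.ne'
    exact (smul_eq_zero.1 h1).resolve_right hd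
  have : Fintype (G ⧸ H) := Fintype.ofFinite _
  have h := hli.fintype_card_le_finrank
  rw [Module.finrank_linearMap, ← Nat.card_eq_fintype_card, ← pow_two] at h
  exact h

lemma isP [FiniteDimensional K V] [Nontrivial V]
    (hK : ∀ m : ℕ, 0 < m → ∃ ζ : K, IsPrimitiveRoot ζ m)
    (φ : LinearMap.BilinForm K V) (haniso : ∀ v : V, v ≠ 0 → φ v v ≠ 0)
    (G : Subgroup (projOrthogonalGroup φ)) [Finite G] : IsPGroup 2 G := by
  rintro ⟨g, hg⟩
  obtain ⟨u, rfl⟩ := QuotientGroup.mk_surjective g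
  obtain ⟨μ, hμ, hu⟩ := u.2
  have h4 := sim_pow_four hK φ haniso u μ hμ hu
    (G.subtype.isOfFinOrder (isOfFinOrder_of_finite (⟨_, hg⟩ : G)))
  refine ⟨2, Subtype.ext ?_⟩
  change (QuotientGroup.mk u : projOrthogonalGroup φ) ^ 4 = 1
  rw [← QuotientGroup.mk_pow, QuotientGroup.eq_one_iff, mem_scalar_iff]
  exact ⟨μ ^ 2, by rw [map_pow, h4]⟩
/-- Let `d ≥ 2` be an even integer. Then there exists a positive
integer `𝐧 = 𝐧(d)`, depending only on `d`, with the following property: for every field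
`K` of characteristic zero containing all roots of unity, every `d`-dimensional
`K`-vector space `V`, and every nondegenerate symmetric anisotropic `K`-bilinear form
`φ` on `V`, every finite subgroup of `PO(V,φ) = GO(V,φ)/(K*·1_V)` has order dividing
`2 ^ 𝐧(d)`. In particular, `PO(V,φ)` is bounded. -/
theorem stmt12 (d : ℕ) (hd2 : 2 ≤ d) (hdeven : Even d) :
    ∃ n : ℕ, 0 < n ∧
      ∀ (K V : Type*) [Field K] [CharZero K] [AddCommGroup V] [Module K V]
        [FiniteDimensional K V], Module.finrank K V = d →
        (∀ m : ℕ, 0 < m → ∃ ζ : K, IsPrimitiveRoot ζ m) →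
        ∀ φ : LinearMap.BilinForm K V,
          (∀ x y : V, φ x y = φ y x) →
          (∀ x : V, (∀ y : V, φ x y = 0) → x = 0) →
          (∀ v : V, v ≠ 0 → φ v v ≠ 0) →
          ∀ G : Subgroup (projOrthogonalGroup φ), Finite G →
            Nat.card G ∣ 2 ^ n := by
  refine ⟨2 ^ d * d ^ 2, by positivity, ?_⟩
  intro K V _ _ _ _ _ hd hK φ _ _ haniso G hG
  have : Nontrivial V := Module.nontrivial_of_finrank_pos (R := K) (by omega)
  obtain ⟨k, hk⟩ := (IsPGroup.iff_card (p := 2)).1 (isP hK φ haniso G)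
  have h1 := card_iso hK φ haniso G
  have h2 := index_iso hK φ haniso G
  have h3 : Nat.card G ≤ 2 ^ d * d ^ 2 := by
    rw [← Subgroup.card_mul_index
      (((isoSub φ).map (QuotientGroup.mk' (scalarSubgroup φ))).subgroupOf G), ← hd]
    exact Nat.mul_le_mul h1 h2
  rw [hk] at h3 ⊢
  exact pow_dvd_pow 2 (Nat.lt_two_pow_self.le.trans h3)
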